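/- arXiv:0704.1696 — 2 statements merged into one kernel-verified Lean document; each statement's English description precedes it below -/
import Mathlib

section
/- Let n ≥ 2, let Λ : ℕ → [0,1] be nonincreasing with Λ(0) = 1, and let ε ∈ (0,1). For every state m ∈ [0,1]^n with 0 < m_1 < m_2 < … < m_n < 1 and every input x ∈ [0,1], the updated state T_ε(m,x) again satisfies 0 < T_ε(m,x)_1 < T_ε(m,x)_2 < … < T_ε(m,x)_n < 1; symmetrically, if 0 < m_n < m_{n−1} < … < m_1 < 1 then T_ε(m,x) satisfies 0 < T_ε(m,x)_n < … < T_ε(m,x)_1 < 1. In other words, the sets F_n^+ and F_n^− are absorbing for the one-dimensional SOM update. -/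
open MeasureTheory Set Filter Topology
open scoped Classical

noncomputable section

/-- The winning unit: the smallest index `i` minimizing `|x - m i|`. -/
def winner {n : ℕ} [NeZero n] (m : Fin n → ℝ) (x : ℝ) : Fin n :=
  (Finset.univ.filter fun i : Fin n => ∀ j, |x - m i| ≤ |x - m j|).min'
    (by
      obtain ⟨i, -, hi⟩ := Finset.exists_min_image (Finset.univ : Finset (Fin n))
        (fun i => |x - m i|) ⟨0, Finset.mem_univ _⟩
      exact ⟨i, Finset.mem_filter.mpr ⟨Finset.mem_univ _,
        fun j => hi j (Finset.mem_univ _)⟩⟩)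

/-- One step of the one-dimensional SOM algorithm with gain `ε` and
neighborhood function `Λ` : `T_ε(m,x)_i = m_i - ε Λ(|i - i₀(x,m)|)(m_i - x)`. -/
def somUpdate {n : ℕ} [NeZero n] (Λ : ℕ → ℝ) (ε : ℝ) (m : Fin n → ℝ) (x : ℝ) :
    Fin n → ℝ :=
  fun i => m i - ε * Λ (Nat.dist i.1 (winner m x).1) * (m i - x)

/-- `F_n^+` : increasingly ordered states with values in `(0,1)`. -/
def Fplus (n : ℕ) : Set (Fin n → ℝ) :=
  {m | StrictMono m ∧ ∀ i, m i ∈ Set.Ioo (0 : ℝ) 1}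

/-- `F_n^-` : decreasingly ordered states with values in `(0,1)`. -/
def Fminus (n : ℕ) : Set (Fin n → ℝ) :=
  {m | StrictAnti m ∧ ∀ i, m i ∈ Set.Ioo (0 : ℝ) 1}

/-!
One step of the algorithm contracts towards `x`: unit `i` keeps the fraction `1 - ε Λ(|i - i₀|)` of
its displacement `m i - x`. In a monotone state the winner lies, in index order, between any two
units on opposite sides of `x`. Hence of two units on the same side of `x` the one farther from `x`
has index at least as far from `i₀` and keeps at least as large a fraction, so the pair stays
ordered; units on opposite sides of `x` cannot cross it. Negating `m` and `x` does not change the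
winner, ties included, which turns the increasing case into the decreasing one.
-/

theorem mul_lt_mul_of_lt_of_sign_imp_le {R : Type*} [Ring R] [LinearOrder R] [IsStrictOrderedRing R]
    {a b c d : R} (hab : a < b) (hc : 0 < c) (hd : 0 < d)
    (hneg : b ≤ 0 → d ≤ c) (hpos : 0 ≤ a → c ≤ d) : c * a < d * b := by
  rcases le_or_gt b 0 with hb | hb
  · calc
      c * a < c * b := mul_lt_mul_of_pos_left hab hc
      _ ≤ d * b := mul_le_mul_of_nonpos_right (hneg hb) hb
  rcases le_or_gt 0 a with ha | ha
  · calc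
      c * a ≤ d * a := mul_le_mul_of_nonneg_right (hpos ha) ha
      _ < d * b := mul_lt_mul_of_pos_left hab hd
  · exact (mul_neg_of_pos_of_neg hc ha).trans (mul_pos hd hb)

section SOM

variable {n : ℕ} [NeZero n] {Λ : ℕ → ℝ} {ε x : ℝ} {m : Fin n → ℝ}

theorem abs_sub_winner_le (m : Fin n → ℝ) (x : ℝ) (j : Fin n) :
    |x - m (winner m x)| ≤ |x - m j| := by
  have hmem : winner m x ∈ Finset.univ.filter fun i => ∀ j, |x - m i| ≤ |x - m j| :=
    Finset.min'_mem _ _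
  exact (Finset.mem_filter.mp hmem).2 j

theorem apply_le_apply_winner {j : Fin n} (hj : m j ≤ x) : m j ≤ m (winner m x) := by
  have hdist := abs_sub_winner_le m x j
  rw [abs_of_nonneg (sub_nonneg.mpr hj)] at hdist
  exact (sub_le_sub_iff_left x).mp ((le_abs_self _).trans hdist)

theorem winner_neg (m : Fin n → ℝ) (x : ℝ) : winner (-m) (-x) = winner m x := by
  simp only [winner, Pi.neg_apply, neg_sub_neg, abs_sub_comm _ x]

theorem apply_winner_le_apply {j : Fin n} (hj : x ≤ m j) : m (winner m x) ≤ m j := by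
  simpa only [winner_neg, Pi.neg_apply, neg_le_neg_iff] using
    apply_le_apply_winner (m := -m) (neg_le_neg hj)

theorem somUpdate_neg (Λ : ℕ → ℝ) (ε : ℝ) (m : Fin n → ℝ) (x : ℝ) :
    somUpdate Λ ε (-m) (-x) = -somUpdate Λ ε m x := by
  ext i
  simp only [somUpdate, winner_neg, Pi.neg_apply]
  ring

theorem somUpdate_apply_eq_add_mul (Λ : ℕ → ℝ) (ε : ℝ) (m : Fin n → ℝ) (x : ℝ) (i : Fin n) :
    somUpdate Λ ε m x i = x + (1 - ε * Λ (Nat.dist i (winner m x))) * (m i - x) := by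
  simp only [somUpdate]
  ring

theorem strictMono_somUpdate (hΛ : Antitone Λ) (hε : 0 ≤ ε) (hlt : ∀ k, ε * Λ k < 1)
    (hm : StrictMono m) (x : ℝ) : StrictMono (somUpdate Λ ε m x) := by
  intro i j hij
  have retention_le {k l : ℕ} (hkl : k ≤ l) : 1 - ε * Λ k ≤ 1 - ε * Λ l :=
    sub_le_sub_left (mul_le_mul_of_nonneg_left (hΛ hkl) hε) 1
  rw [somUpdate_apply_eq_add_mul, somUpdate_apply_eq_add_mul]
  refine add_lt_add_right (mul_lt_mul_of_lt_of_sign_imp_le (sub_lt_sub_right (hm hij) x)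
    (sub_pos.mpr (hlt _)) (sub_pos.mpr (hlt _)) (fun hj => retention_le ?_)
    (fun hi => retention_le ?_)) x
  · have hjw : j ≤ winner m x := hm.le_iff_le.mp (apply_le_apply_winner (sub_nonpos.mp hj))
    rw [Nat.dist_eq_sub_of_le hjw, Nat.dist_eq_sub_of_le (hij.le.trans hjw)]
    exact Nat.sub_le_sub_left hij.le _
  · have hwi : winner m x ≤ i := hm.le_iff_le.mp (apply_winner_le_apply (sub_nonneg.mp hi))
    rw [Nat.dist_eq_sub_of_le_right hwi, Nat.dist_eq_sub_of_le_right (hwi.trans hij.le)]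
    exact Nat.sub_le_sub_right hij.le _

theorem strictAnti_somUpdate (hΛ : Antitone Λ) (hε : 0 ≤ ε) (hlt : ∀ k, ε * Λ k < 1)
    (hm : StrictAnti m) (x : ℝ) : StrictAnti (somUpdate Λ ε m x) := by
  have hneg : StrictMono (-somUpdate Λ ε m x) :=
    somUpdate_neg Λ ε m x ▸ strictMono_somUpdate hΛ hε hlt hm.neg (-x)
  exact fun i j hij => neg_lt_neg_iff.mp (hneg hij)

theorem somUpdate_apply_mem_interior {s : Set ℝ} (hs : Convex ℝ s)
    (hw : ∀ k, ε * Λ k ∈ Ico (0 : ℝ) 1) (hx : x ∈ closure s) {i : Fin n}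
    (hi : m i ∈ interior s) : somUpdate Λ ε m x i ∈ interior s := by
  rw [somUpdate_apply_eq_add_mul]
  obtain ⟨hnonneg, hlt⟩ := hw (Nat.dist i (winner m x))
  exact hs.add_smul_sub_mem_interior' hx hi ⟨sub_pos.mpr hlt, sub_le_self 1 hnonneg⟩

end SOM

/-- For `n ≥ 2`, a nonincreasing neighborhood function
`Λ : ℕ → [0,1]` with `Λ 0 = 1`, and a gain `ε ∈ (0,1)`, the sets `F_n^+` and
`F_n^-` are absorbing for the one-dimensional SOM update: for every state
`m` in `F_n^+` (resp. `F_n^-`) and every input `x ∈ [0,1]`, the updated state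
`T_ε(m,x)` again belongs to `F_n^+` (resp. `F_n^-`). -/
theorem som_Fplus_Fminus_absorbing {n : ℕ} [NeZero n] (hn : 2 ≤ n)
    (Λ : ℕ → ℝ) (hΛanti : Antitone Λ) (hΛ0 : Λ 0 = 1)
    (hΛrange : ∀ k, Λ k ∈ Set.Icc (0 : ℝ) 1)
    (ε : ℝ) (hε : ε ∈ Set.Ioo (0 : ℝ) 1)
    (x : ℝ) (hx : x ∈ Set.Icc (0 : ℝ) 1) :
    (∀ m ∈ Fplus n, somUpdate Λ ε m x ∈ Fplus n) ∧
    (∀ m ∈ Fminus n, somUpdate Λ ε m x ∈ Fminus n) := by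
  have hw (k : ℕ) : ε * Λ k ∈ Ico (0 : ℝ) 1 :=
    ⟨mul_nonneg hε.1.le (hΛrange k).1,
      mul_lt_one_of_nonneg_of_lt_one_left hε.1.le hε.2 (hΛrange k).2⟩
  have hmem {m : Fin n → ℝ} (hm : ∀ i, m i ∈ Ioo (0 : ℝ) 1) (i : Fin n) :
      somUpdate Λ ε m x i ∈ Ioo (0 : ℝ) 1 := by
    rw [← interior_Icc] at hm ⊢
    exact somUpdate_apply_mem_interior (convex_Icc 0 1) hw (subset_closure hx) (hm i)
  exact ⟨fun m ⟨hmono, hm⟩ =>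
      ⟨strictMono_somUpdate hΛanti hε.1.le (fun k => (hw k).2) hmono x, hmem hm⟩,
    fun m ⟨hanti, hm⟩ =>
      ⟨strictAnti_somUpdate hΛanti hε.1.le (fun k => (hw k).2) hanti x, hmem hm⟩⟩

end
end

section
/- Let n ≥ 2, let Λ : ℕ → [0,1] be nonincreasing with Λ(0) = 1, and let μ be a probability measure on [0,1] whose density f is positive and continuous on (0,1). Then the mean field h of the one-dimensional SOM algorithm is continuously differentiable on F_n^+ and the dynamical system dm/dt = −h(m) is cooperative on F_n^+: for every m ∈ F_n^+ and all indices i ≠ j, the off-diagonal entry ∂h_i/∂m_j(m) of the Jacobian ∇h(m) is nonpositive. -/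
open MeasureTheory Set Filter Topology
open scoped Classical ENNReal

noncomputable section

/-- The Voronoi boundary points `x_0 = 0`, `x_j = (m_j + m_{j+1})/2`, `x_n = 1`. -/
def somBnd {n : ℕ} (m : Fin n → ℝ) (j : ℕ) : ℝ :=
  if j = 0 then 0
  else if h : j < n then
    (m ⟨j - 1, lt_of_le_of_lt (Nat.sub_le j 1) h⟩ + m ⟨j, h⟩) / 2
  else 1

/-- The mean field of the one-dimensional SOM algorithm for the input density
`f` : `h_i(m) = Σ_j Λ(|i-j|) ∫_{C_j(m)} (m_i - x) f(x) dx`. -/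
def meanField {n : ℕ} (Λ : ℕ → ℝ) (f : ℝ → ℝ) (m : Fin n → ℝ) : Fin n → ℝ :=
  fun i => ∑ j : Fin n, Λ (Nat.dist i.1 j.1) *
    ∫ x in Set.Icc (somBnd m j.1) (somBnd m (j.1 + 1)), (m i - x) * f x

/-!
Summation by parts over the Voronoi intervals turns the mean field into
`h_i(m) = Λ(|i-n|) Φ(m_i, 1) + Σ_{0<k<n} (Λ(|i-k|) - Λ(|i-k-1|)) Φ(m_i, x_k)`, where
`Φ(c, t) = ∫_0^t (c - x) f(x) dx` is `C¹` on `ℝ × (0, 1)` with `∂Φ/∂t = (c - t) f(t)`. Hence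
`∂h_i/∂m_j = Σ_{0<k<n} (Λ(|i-k|) - Λ(|i-k-1|)) (m_i - x_k) f(x_k) ∂x_k/∂m_j` for `j ≠ i`.
As `Λ` is nonincreasing, its difference and `m_i - x_k` have opposite signs whichever side of
`m_i` the point `x_k` lies on, while `f(x_k)` and `∂x_k/∂m_j` are nonnegative.
-/

theorem integrableOn_of_isFiniteMeasure_withDensity {α : Type*} [TopologicalSpace α]
    [MeasurableSpace α] [OpensMeasurableSpace α] [SecondCountableTopologyEither α ℝ]
    {ν : Measure α} {f : α → ℝ} {s : Set α}
    [IsFiniteMeasure (ν.withDensity fun x => ENNReal.ofReal (f x))]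
    (hs : MeasurableSet s) (hfc : ContinuousOn f s) (hf0 : ∀ x ∈ s, 0 ≤ f x) :
    IntegrableOn f s ν := by
  refine (lintegral_ofReal_ne_top_iff_integrable (hfc.aestronglyMeasurable hs)
    (ae_restrict_of_forall_mem hs hf0)).1 ?_
  rw [← withDensity_apply _ hs]
  exact measure_ne_top _ s

theorem isOpen_setOf_strictMono {ι α : Type*} [Finite ι] [Preorder ι] [LinearOrder α]
    [TopologicalSpace α] [OrderClosedTopology α] : IsOpen {m : ι → α | StrictMono m} := by
  simp only [StrictMono, ofPred_forall]
  exact isOpen_iInter_of_finite fun i => isOpen_iInter_of_finite fun j =>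
    isOpen_iInter_of_finite fun _ => isOpen_lt (continuous_apply i) (continuous_apply j)

section FundamentalTheorem

variable {E : Type*} [NormedAddCommGroup E] [NormedSpace ℝ E] [CompleteSpace E]
  {g : ℝ → E} {a b t : ℝ}

theorem hasDerivAt_integral_of_continuousOn_Ioo
    (hg : IntervalIntegrable g volume a b) (hc : ContinuousOn g (Ioo a b)) (ht : t ∈ Ioo a b) :
    HasDerivAt (fun u => ∫ x in a..u, g x) (g t) t :=
  intervalIntegral.integral_hasDerivAt_right
    (hg.mono_set (uIcc_subset_uIcc_left (Icc_subset_uIcc (Ioo_subset_Icc_self ht))))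
    (hc.stronglyMeasurableAtFilter isOpen_Ioo t ht) (hc.continuousAt (isOpen_Ioo.mem_nhds ht))

theorem contDiffOn_integral_of_continuousOn_Ioo
    (hg : IntervalIntegrable g volume a b) (hc : ContinuousOn g (Ioo a b)) :
    ContDiffOn ℝ 1 (fun u => ∫ x in a..u, g x) (Ioo a b) := by
  have hderiv := fun t ht => hasDerivAt_integral_of_continuousOn_Ioo (t := t) hg hc ht
  rw [← zero_add 1, contDiffOn_succ_iff_deriv_of_isOpen isOpen_Ioo, contDiffOn_zero]
  exact ⟨fun t ht => (hderiv t ht).differentiableAt.differentiableWithinAt, by simp,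
    hc.congr fun t ht => (hderiv t ht).deriv⟩

end FundamentalTheorem

section PartialMoment

/-- The first moment about `c` of the density `f` on `[0, t]`, with the sign convention of
`meanField`: the potential `Φ(c, t)` whose increments over the Voronoi intervals make up the mean
field. -/
def partialMoment (f : ℝ → ℝ) (c t : ℝ) : ℝ :=
  ∫ x in (0 : ℝ)..t, (c - x) * f x

variable {f : ℝ → ℝ} {t : ℝ}

theorem intervalIntegrable_sub_mul {a b : ℝ} (hf : IntervalIntegrable f volume a b) (c : ℝ) :
    IntervalIntegrable (fun x => (c - x) * f x) volume a b :=
  hf.continuousOn_mul (by fun_prop)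

theorem partialMoment_eq (hf : IntervalIntegrable f volume 0 t) (c : ℝ) :
    partialMoment f c t = c * (∫ x in (0 : ℝ)..t, f x) - ∫ x in (0 : ℝ)..t, x * f x := by
  have hmul : IntervalIntegrable (fun x => x * f x) volume 0 t :=
    hf.continuousOn_mul continuousOn_id
  simp only [partialMoment, sub_mul]
  rw [intervalIntegral.integral_sub (hf.const_mul c) hmul, intervalIntegral.integral_const_mul]

theorem contDiff_partialMoment_left (hf : IntervalIntegrable f volume 0 t) :
    ContDiff ℝ 1 fun c => partialMoment f c t := by
  simp only [partialMoment_eq hf]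
  fun_prop

variable (hf : IntervalIntegrable f volume 0 1) (hc : ContinuousOn f (Ioo 0 1))
include hf hc

theorem contDiffOn_partialMoment :
    ContDiffOn ℝ 1 (fun p : ℝ × ℝ => partialMoment f p.1 p.2) (univ ×ˢ Ioo 0 1) := by
  have hmass := contDiffOn_integral_of_continuousOn_Ioo hf hc
  have hmean := contDiffOn_integral_of_continuousOn_Ioo
    (hf.continuousOn_mul continuousOn_id) (continuousOn_id.mul hc)
  have hsnd : MapsTo Prod.snd (univ ×ˢ Ioo (0 : ℝ) 1 : Set (ℝ × ℝ)) (Ioo 0 1) := fun p hp => hp.2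
  refine ((contDiffOn_fst.mul (hmass.comp contDiffOn_snd hsnd)).sub
    (hmean.comp contDiffOn_snd hsnd)).congr fun p hp => ?_
  exact partialMoment_eq (hf.mono_set
    (uIcc_subset_uIcc_left (Icc_subset_uIcc (Ioo_subset_Icc_self hp.2)))) p.1

theorem hasDerivAt_partialMoment (c : ℝ) (ht : t ∈ Ioo 0 1) :
    HasDerivAt (partialMoment f c) ((c - t) * f t) t :=
  hasDerivAt_integral_of_continuousOn_Ioo (intervalIntegrable_sub_mul hf c)
    ((by fun_prop : ContinuousOn (fun x => c - x) (Ioo 0 1)).mul hc) ht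

end PartialMoment

section VoronoiBoundary

theorem isOpen_Fplus (n : ℕ) : IsOpen (Fplus n) := by
  simp only [Fplus, ofPred_and, ofPred_forall]
  exact isOpen_setOf_strictMono.inter
    (isOpen_iInter_of_finite fun i => isOpen_Ioo.preimage (continuous_apply i))

variable {n : ℕ}

theorem somBnd_zero (m : Fin n → ℝ) : somBnd m 0 = 0 := rfl

theorem somBnd_of_le (m : Fin (n + 1) → ℝ) {k : ℕ} (hk : n + 1 ≤ k) : somBnd m k = 1 := by
  simp [somBnd, hk.not_gt, (Nat.succ_pos n).trans_le hk |>.ne']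

theorem somBnd_succ (m : Fin (n + 1) → ℝ) (k : Fin n) :
    somBnd m (k + 1) = (m k.castSucc + m k.succ) / 2 := by
  simp only [somBnd, k.1.succ_ne_zero, Nat.succ_lt_succ k.2, if_false, dif_pos]
  rfl

theorem somBnd_le {m : Fin n → ℝ} (hm : m ∈ Fplus n) {k : ℕ} {i : Fin n} (hki : k ≤ i) :
    somBnd m k ≤ m i := by
  rcases Nat.eq_zero_or_pos k with rfl | hk
  · exact (hm.2 i).1.le
  have hkn : k < n := hki.trans_lt i.2
  have hpred : m ⟨k - 1, by omega⟩ ≤ m i := hm.1.monotone (Fin.le_def.2 (by dsimp only; omega))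
  have hself : m ⟨k, hkn⟩ ≤ m i := hm.1.monotone (Fin.le_def.2 hki)
  simp only [somBnd, hk.ne', hkn, if_false, dif_pos]
  linarith

theorem le_somBnd {m : Fin n → ℝ} (hm : m ∈ Fplus n) {k : ℕ} {i : Fin n} (hik : i < k) :
    m i ≤ somBnd m k := by
  have hk : k ≠ 0 := by omega
  by_cases hkn : k < n
  · have hpred : m i ≤ m ⟨k - 1, by omega⟩ := hm.1.monotone (Fin.le_def.2 (by dsimp only; omega))
    have hself : m i ≤ m ⟨k, hkn⟩ := hm.1.monotone (Fin.le_def.2 hik.le)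
    simp only [somBnd, hk, hkn, if_false, dif_pos]
    linarith
  · simpa [somBnd, hk, hkn] using (hm.2 i).2.le

variable {m : Fin (n + 1) → ℝ} (hm : m ∈ Fplus (n + 1))
include hm

theorem somBnd_succ_mem_Ioo (k : Fin n) : somBnd m (k + 1) ∈ Ioo 0 1 :=
  ⟨(hm.2 k.castSucc).1.trans_le (le_somBnd hm (by simp)),
    (somBnd_le hm (by simp)).trans_lt (hm.2 k.succ).2⟩

theorem somBnd_mem_Icc (k : ℕ) : somBnd m k ∈ Icc 0 1 := by
  rcases k with _ | k
  · simp [somBnd_zero]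
  rcases lt_or_ge k n with hk | hk
  · exact Ioo_subset_Icc_self (somBnd_succ_mem_Ioo hm ⟨k, hk⟩)
  · simp [somBnd_of_le m (Nat.succ_le_succ hk)]

end VoronoiBoundary

section MeanField

variable {n : ℕ} {Λ : ℕ → ℝ} {f : ℝ → ℝ} {m : Fin (n + 1) → ℝ}

theorem meanField_eq_sum_partialMoment (hf : IntervalIntegrable f volume 0 1)
    (hm : m ∈ Fplus (n + 1)) (i : Fin (n + 1)) :
    meanField Λ f m i = Λ (Nat.dist i n) * partialMoment f (m i) 1 +
      ∑ k : Fin n, (Λ (Nat.dist i k) - Λ (Nat.dist i (k + 1))) *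
        partialMoment f (m i) (somBnd m (k + 1)) := by
  let cell (k : ℕ) : ℝ := ∫ x in somBnd m k..somBnd m (k + 1), (m i - x) * f x
  have hcell (j : Fin (n + 1)) :
      ∫ x in Icc (somBnd m j) (somBnd m (j + 1)), (m i - x) * f x = cell j := by
    rw [integral_Icc_eq_integral_Ioc, ← intervalIntegral.integral_of_le
      ((somBnd_le hm le_rfl).trans (le_somBnd hm j.1.lt_succ_self))]
  have hsum_cell (k : ℕ) : ∑ l ∈ Finset.range k, cell l = partialMoment f (m i) (somBnd m k) :=
    intervalIntegral.sum_integral_adjacent_intervals fun l _ =>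
      intervalIntegrable_sub_mul (hf.mono_set (uIcc_subset_uIcc
        (Icc_subset_uIcc (somBnd_mem_Icc hm l)) (Icc_subset_uIcc (somBnd_mem_Icc hm (l + 1))))) _
  have hparts := Finset.sum_range_by_parts (fun k => Λ (Nat.dist i k)) cell (n + 1)
  simp only [smul_eq_mul, hsum_cell, Nat.add_sub_cancel, somBnd_of_le m le_rfl,
    Finset.sum_range] at hparts
  rw [← sub_neg_eq_add, ← Finset.sum_neg_distrib]
  simp only [meanField, hcell, hparts, ← neg_mul, neg_sub]

theorem contDiffOn_meanField (hf : IntervalIntegrable f volume 0 1)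
    (hc : ContinuousOn f (Ioo 0 1)) (i : Fin (n + 1)) :
    ContDiffOn ℝ 1 (fun m => meanField Λ f m i) (Fplus (n + 1)) := by
  have hinterior (k : Fin n) : ContDiffOn ℝ 1
      (fun m : Fin (n + 1) → ℝ => partialMoment f (m i) (somBnd m (k + 1))) (Fplus (n + 1)) := by
    refine (contDiffOn_partialMoment hf hc).comp
      (f := fun m : Fin (n + 1) → ℝ => (m i, somBnd m (k + 1))) ?_
      fun m hm => ⟨mem_univ _, somBnd_succ_mem_Ioo hm k⟩
    simp only [somBnd_succ]
    fun_prop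
  have htotal : ContDiff ℝ 1 fun m : Fin (n + 1) → ℝ => partialMoment f (m i) 1 :=
    (contDiff_partialMoment_left hf).comp (contDiff_apply ℝ ℝ i)
  exact ((contDiffOn_const.mul htotal.contDiffOn).add
    (ContDiffOn.sum fun k _ => contDiffOn_const.mul (hinterior k))).congr
    fun m hm => meanField_eq_sum_partialMoment hf hm i

theorem hasLineDerivAt_meanField (hf : IntervalIntegrable f volume 0 1)
    (hc : ContinuousOn f (Ioo 0 1)) (hm : m ∈ Fplus (n + 1)) {i : Fin (n + 1)}
    {v : Fin (n + 1) → ℝ} (hvi : v i = 0) :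
    HasLineDerivAt ℝ (fun m' => meanField Λ f m' i)
      (∑ k : Fin n, (Λ (Nat.dist i k) - Λ (Nat.dist i (k + 1))) *
        ((m i - somBnd m (k + 1)) * f (somBnd m (k + 1)) * ((v k.castSucc + v k.succ) / 2)))
      m v := by
  have hbnd (k : Fin n) : HasDerivAt (fun t : ℝ => somBnd (m + t • v) (k + 1))
      ((v k.castSucc + v k.succ) / 2) 0 := by
    have hcoord (l : Fin (n + 1)) : HasDerivAt (fun t : ℝ => (m + t • v) l) (v l) 0 := by
      simpa using ((hasDerivAt_id (0 : ℝ)).mul_const (v l)).const_add (m l)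
    simpa only [somBnd_succ] using ((hcoord k.castSucc).fun_add (hcoord k.succ)).div_const 2
  have hmoment (k : Fin n) := (hasDerivAt_partialMoment hf hc (m i)
    (somBnd_succ_mem_Ioo hm k)).comp_of_eq 0 (hbnd k) (by simp)
  have hparts := (HasDerivAt.fun_sum (u := Finset.univ) fun k _ =>
    (hmoment k).const_mul (Λ (Nat.dist i k) - Λ (Nat.dist i (k + 1)))).const_add
      (Λ (Nat.dist i n) * partialMoment f (m i) 1)
  refine HasLineDerivAt.congr_of_eventuallyEq ?_
    (((isOpen_Fplus (n + 1)).eventually_mem hm).mono fun m' hm' =>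
      meanField_eq_sum_partialMoment hf hm' i)
  simpa [HasLineDerivAt, hvi] using hparts

theorem sub_mul_sub_somBnd_nonpos (hΛ : Antitone Λ) (hm : m ∈ Fplus (n + 1)) (i : Fin (n + 1))
    (k : ℕ) :
    (Λ (Nat.dist i k) - Λ (Nat.dist i (k + 1))) * (m i - somBnd m (k + 1)) ≤ 0 := by
  rcases le_or_gt (k + 1) (i : ℕ) with hki | hik
  · have hdist : Nat.dist i (k + 1) ≤ Nat.dist i k := by unfold Nat.dist; omega
    exact mul_nonpos_of_nonpos_of_nonneg (sub_nonpos.2 (hΛ hdist))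
      (sub_nonneg.2 (somBnd_le hm hki))
  · have hdist : Nat.dist i k ≤ Nat.dist i (k + 1) := by unfold Nat.dist; omega
    exact mul_nonpos_of_nonneg_of_nonpos (sub_nonneg.2 (hΛ hdist))
      (sub_nonpos.2 (le_somBnd hm hik))

theorem fderiv_meanField_nonpos (hΛ : Antitone Λ) (hf : IntervalIntegrable f volume 0 1)
    (hf0 : ∀ x ∈ Ioo (0 : ℝ) 1, 0 ≤ f x) (hc : ContinuousOn f (Ioo 0 1))
    (hm : m ∈ Fplus (n + 1)) {i : Fin (n + 1)} {v : Fin (n + 1) → ℝ} (hv : 0 ≤ v)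
    (hvi : v i = 0) : fderiv ℝ (fun m' => meanField Λ f m' i) m v ≤ 0 := by
  have hdiff : DifferentiableAt ℝ (fun m' => meanField Λ f m' i) m :=
    ((contDiffOn_meanField hf hc i).contDiffAt
      ((isOpen_Fplus (n + 1)).mem_nhds hm)).differentiableAt one_ne_zero
  rw [← hdiff.lineDeriv_eq_fderiv, (hasLineDerivAt_meanField hf hc hm hvi).lineDeriv]
  refine Finset.sum_nonpos fun k _ => ?_
  rw [mul_assoc, ← mul_assoc (_ - _) (_ - _)]
  exact mul_nonpos_of_nonpos_of_nonneg (sub_mul_sub_somBnd_nonpos hΛ hm i k)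
    (mul_nonneg (hf0 _ (somBnd_succ_mem_Ioo hm k))
      (div_nonneg (add_nonneg (hv _) (hv _)) zero_le_two))

end MeanField

theorem som_meanField_cooperative_general {n : ℕ} {Λ : ℕ → ℝ} (hΛ : Antitone Λ) {f : ℝ → ℝ}
    (hf : IntegrableOn f (Ioo 0 1)) (hf0 : ∀ x ∈ Ioo (0 : ℝ) 1, 0 ≤ f x)
    (hc : ContinuousOn f (Ioo 0 1)) :
    ContDiffOn ℝ 1 (meanField Λ f) (Fplus n) ∧
    ∀ m ∈ Fplus n, ∀ i j : Fin n, i ≠ j →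
      fderiv ℝ (fun m' => meanField Λ f m' i) m (Pi.single j 1) ≤ 0 := by
  rcases n with _ | n
  · exact ⟨contDiffOn_pi.2 fun i => i.elim0, fun _ _ i => i.elim0⟩
  have hf01 := (intervalIntegrable_iff_integrableOn_Ioo_of_le zero_le_one).2 hf
  exact ⟨contDiffOn_pi.2 fun i => contDiffOn_meanField hf01 hc i,
    fun m hm i j hij => fderiv_meanField_nonpos hΛ hf01 hf0 hc hm
      (Pi.single_nonneg.2 zero_le_one) (Pi.single_eq_of_ne hij 1)⟩

/-- If the density `f` is positive and continuous on `(0,1)`,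
then the mean field `h` is `C¹` on `F_n^+` and the system `dm/dt = -h(m)` is
cooperative there: all off-diagonal entries `∂h_i/∂m_j` (`i ≠ j`) of the
Jacobian of `h` are nonpositive. -/
theorem som_meanField_cooperative {n : ℕ} (hn : 2 ≤ n)
    (Λ : ℕ → ℝ) (hΛanti : Antitone Λ) (hΛ0 : Λ 0 = 1)
    (hΛrange : ∀ k, Λ k ∈ Set.Icc (0 : ℝ) 1)
    (μ : Measure ℝ) [IsProbabilityMeasure μ] (f : ℝ → ℝ)
    (hdens : μ = volume.withDensity fun x => ENNReal.ofReal (f x))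
    (hsupp : ∀ x, x ∉ Set.Icc (0 : ℝ) 1 → f x = 0)
    (hfpos : ∀ x ∈ Set.Ioo (0 : ℝ) 1, 0 < f x)
    (hfcont : ContinuousOn f (Set.Ioo (0 : ℝ) 1)) :
    ContDiffOn ℝ 1 (meanField Λ f) (Fplus n) ∧
    ∀ m ∈ Fplus n, ∀ i j : Fin n, i ≠ j →
      fderiv ℝ (fun m' => meanField Λ f m' i) m (Pi.single j 1) ≤ 0 := by
  subst hdens
  exact som_meanField_cooperative_general hΛanti (integrableOn_of_isFiniteMeasure_withDensity
    measurableSet_Ioo hfcont (fun x hx => (hfpos x hx).le)) (fun x hx => (hfpos x hx).le) hfcont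

end
end
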